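/- Let A = (a_ij) be an n×n dual quaternion Hermitian matrix with eigenvalues λ₁,…,λ_n. Then Mdet(A) = Cdet(A), and consequently Mdet(A) = λ₁ λ₂ ⋯ λ_n. -/

import Mathlib

/-!
# Why the Moore and Chen determinants agree with the product of the eigenvalues

Dual quaternions are quaternions over the commutative ring `K` of dual numbers (`dqHom`), so the
result is proved for a Hermitian matrix `A` over `ℍ[K]`, with `K` any commutative ring in which `2`
is invertible, that is unitarily diagonalized with scalar eigenvalues `λ i`
(`dets_of_diagonalization`).

*Deformation.* Both determinants commute with ring homomorphisms, so `A` may be replaced by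
`1 + X (A - 1)` over polynomials, and `X` set to `1` afterwards. Polynomials embed into power series,
where this matrix is the identity modulo `X`; so all padded principal submatrices are invertible and
all pivots are units. The same unitary matrix diagonalizes it, with eigenvalues `1 + X (λ i - 1)`.

*Minors.* Representing quaternions as `4 × 4` matrices gives a multiplicative `quatDet`. By the Schur
complement factorization (`pivot_step`), in which each pivot is self-adjoint and hence a scalar,
`quatDet` of each principal submatrix is the fourth power of a scalar `g S`. Requiring `g S` to be
`1` modulo `X` makes it unique (`fourth_root_unique`), so it does not depend on the order of
elimination. The inverses scaled by `g S` behave as adjugates of the principal submatrices.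

*Permutation sums.* Split each permutation of `S` into the cycle through a chosen element `v` and the
rest. Deleting the first point of the path turns the signed sum over permutations sending `j` to `i`
into the recursion satisfied by the adjugate entry `(i, j)` (`path_sum`); by induction on `S` the sum
over the remaining cycles is the scalar `g`. Hence the full sum is `g S`, whenever the cycle
of `v` stands at an end of the ordered product (`subDet_eq`). In the Chen normalization the
cycle of the maximum comes first; in the Moore normalization the cycle of the minimum comes last.
So both determinants equal `g univ`, the fourth root of
`quatDet (1 + X (A - 1)) = (∏ i, (1 + X (λ i - 1))) ^ 4` that is `1` modulo `X`, which is
`∏ i, (1 + X (λ i - 1))`.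
-/

/-!
Formalization background for "Moore Determinant of Dual Quaternion Hermitian Matrices"
(Cui, Qi, Song, Wang).

A dual quaternion is `q = q_s + q_d ε` with `q_s, q_d` quaternions, `ε² = 0`; it is modeled
by `DualNumber (Quaternion ℝ)`.
-/

open Quaternion Matrix

noncomputable section

/-- Dual quaternions: dual numbers over the quaternions. -/
abbrev DualQuaternion : Type := DualNumber (Quaternion ℝ)

namespace DQPaper

/-- Conjugation of dual quaternions: `(q_s + q_d ε)* = q_s* + q_d* ε`. -/
instance : Star DualQuaternion := ⟨fun q => (star q.fst, star q.snd)⟩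

/-- The real part of a dual quaternion `q = q_s + q_d ε`, as the dual number
`Re(q_s) + Re(q_d) ε`. -/
def dqRe (q : DualQuaternion) : DualNumber ℝ := (q.fst.re, q.snd.re)

/-- The embedding of the dual numbers into the dual quaternions. -/
def toDQ (d : DualNumber ℝ) : DualQuaternion := ((d.fst : ℍ[ℝ]), (d.snd : ℍ[ℝ]))

/-- A dual quaternion is a dual number if its standard and dual parts are both real. -/
def IsDualNum (q : DualQuaternion) : Prop := ∃ d : DualNumber ℝ, q = toDQ d

/-- A dual number `a + b ε` is nonnegative if `a > 0`, or `a = 0` and `b ≥ 0`. -/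
def DNNonneg (u : DualNumber ℝ) : Prop := 0 < u.fst ∨ (u.fst = 0 ∧ 0 ≤ u.snd)

/-- The order on dual numbers: `u ≤ v` iff `v - u` is nonnegative. -/
def dnLe (u v : DualNumber ℝ) : Prop := DNNonneg (v - u)

open Classical in
/-- The magnitude of a dual quaternion `p = p_s + p_d ε`, as a dual number:
`|p| = |p_s| + ((p_s* p_d + p_d* p_s)/(2|p_s|)) ε` if `p_s ≠ 0`, and `|p| = |p_d| ε`
otherwise. -/
def dqMag (p : DualQuaternion) : DualNumber ℝ :=
  if p.fst = 0 then (0, ‖p.snd‖)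
  else (‖p.fst‖, ((star p.fst * p.snd + star p.snd * p.fst).re) / (2 * ‖p.fst‖))

/-- The cycle of the permutation `σ` containing `i`, listed as `[i, σ i, σ² i, …]`. -/
def cycleList {n : ℕ} (σ : Equiv.Perm (Fin n)) (i : Fin n) : List (Fin n) :=
  i :: (((List.range n).map (fun k => (σ ^ (k + 1)) i)).takeWhile (fun j => decide (j ≠ i)))

/-- The leaders (largest element of each cycle) of `σ`, listed in decreasing order;
this is the normalization used in the Chen determinant. -/
def chenLeaders {n : ℕ} (σ : Equiv.Perm (Fin n)) : List (Fin n) :=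
  ((List.finRange n).filter (fun i => (cycleList σ i).all (fun j => decide (j ≤ i)))).reverse

/-- All of `Fin n` listed in the normalized cycle order of the Chen determinant:
each cycle is led by its largest element, and cycles are ordered by decreasing leaders
(so the first cycle contains the last index). -/
def chenOrder {n : ℕ} (σ : Equiv.Perm (Fin n)) : List (Fin n) :=
  ((chenLeaders σ).map (cycleList σ)).flatten

/-- The Chen determinant of a square matrix over a (possibly noncommutative) ring:
`Cdet A = Σ_σ (−1)^{n−r} a_σ`, where `σ` runs over all permutations written in the
normalized cycle form with `r` disjoint cycles, and `a_σ` is the ordered product of the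
entries `A i (σ i)` along the normalized cycle order. -/
def Cdet {n : ℕ} {R : Type*} [Ring R] (A : Matrix (Fin n) (Fin n) R) : R :=
  ∑ σ : Equiv.Perm (Fin n),
    (-1 : R) ^ (n - (chenLeaders σ).length) * ((chenOrder σ).map (fun i => A i (σ i))).prod

/-- The leaders (smallest element of each cycle) of `σ`, listed in decreasing order;
this is the normalization used in the Moore determinant. -/
def mooreLeaders {n : ℕ} (σ : Equiv.Perm (Fin n)) : List (Fin n) :=
  ((List.finRange n).filter (fun i => (cycleList σ i).all (fun j => decide (i ≤ j)))).reverse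

/-- All of `Fin n` listed in the normalized cycle order of the Moore determinant:
each cycle is led by its smallest element, and cycles are ordered by decreasing leaders. -/
def mooreOrder {n : ℕ} (σ : Equiv.Perm (Fin n)) : List (Fin n) :=
  ((mooreLeaders σ).map (cycleList σ)).flatten

/-- The Moore determinant of a square matrix over a (possibly noncommutative) ring:
`Mdet A = Σ_σ s(σ) a_σ`, where `s(σ)` is the sign of `σ` and `a_σ` is the ordered product
of the entries `A i (σ i)` along the normalized (Moore) cycle order. -/
def Mdet {n : ℕ} {R : Type*} [Ring R] (A : Matrix (Fin n) (Fin n) R) : R :=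
  ∑ σ : Equiv.Perm (Fin n),
    ((Equiv.Perm.sign σ : ℤ) : R) * ((mooreOrder σ).map (fun i => A i (σ i))).prod

/-- The switching matrix `P_{ij}`: the identity matrix with rows `i` and `j` interchanged. -/
def switchMatrix {R : Type*} [Ring R] {n : ℕ} (i j : Fin n) : Matrix (Fin n) (Fin n) R :=
  Matrix.of fun k l =>
    if (k = i ∧ l = j) ∨ (k = j ∧ l = i) ∨ (k = l ∧ k ≠ i ∧ k ≠ j) then 1 else 0

/-- The multiplication matrix `P_{i;c}`: the identity matrix with the `(i,i)` entry
replaced by `c`. -/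
def mulMatrix {R : Type*} [Ring R] {n : ℕ} (i : Fin n) (c : R) : Matrix (Fin n) (Fin n) R :=
  Matrix.of fun k l => if k = l then (if k = i then c else 1) else 0

/-- The addition matrix `P_{ij;c}`: the identity matrix with an extra entry `c` in
position `(j,i)`, so that `P_{ij;c} * A` adds `c` times row `i` of `A` to row `j`. -/
def addMatrix {R : Type*} [Ring R] {n : ℕ} (i j : Fin n) (c : R) : Matrix (Fin n) (Fin n) R :=
  Matrix.of fun k l => (if k = l then 1 else 0) + (if k = j ∧ l = i then c else 0)

/-- The product `A i₁ i₂ * A i₂ i₃ * ⋯ * A i_{m-1} i_m` of matrix entries along a chain of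
indices `[i₁, …, i_m]`; applied to a closed chain `[i₁, …, i_m, i₁]` it gives the cycle
product `⟨i₁ … i_m i₁⟩ = a_{i₁ i₂} ⋯ a_{i_m i₁}`. -/
def chainProd {n : ℕ} (A : Matrix (Fin n) (Fin n) DualQuaternion) :
    List (Fin n) → DualQuaternion
  | [] => 1
  | [_] => 1
  | i :: j :: rest => A i j * chainProd A (j :: rest)

/-- A dual number `lam` is a (right) eigenvalue of the dual quaternion matrix `A` if
`A x = x lam` for some appreciable dual quaternion vector `x` (i.e. one whose standard
part is nonzero). -/
def IsEigenvalue {n : ℕ} (A : Matrix (Fin n) (Fin n) DualQuaternion)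
    (lam : DualNumber ℝ) : Prop :=
  ∃ x : Fin n → DualQuaternion,
    (fun i => (x i).fst) ≠ 0 ∧ A.mulVec x = fun i => x i * toDQ lam

/-- The dual quaternion Hermitian matrix `A` has the dual numbers `lam 1, …, lam n` as its
eigenvalues (counted with multiplicity), via the unitary diagonalization `U A U* = diag(lam)`
of Qi and Luo (2023). -/
def HasEigenvalues {n : ℕ} (A : Matrix (Fin n) (Fin n) DualQuaternion)
    (lam : Fin n → DualNumber ℝ) : Prop :=
  ∃ U : Matrix (Fin n) (Fin n) DualQuaternion,
    Uᴴ * U = 1 ∧ U * A * Uᴴ = Matrix.diagonal fun i => toDQ (lam i)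

/-! ### The cycle lists -/

theorem exists_period {n : ℕ} (σ : Equiv.Perm (Fin n)) (x : Fin n) :
    ∃ N, 0 < N ∧ (σ ^ N) x = x ∧ ∀ t, 0 < t → t < N → (σ ^ t) x ≠ x := by
  have h : ∃ N, 0 < N ∧ (σ ^ N) x = x := ⟨orderOf σ, orderOf_pos σ, by simp [pow_orderOf_eq_one]⟩
  classical
  refine ⟨Nat.find h, (Nat.find_spec h).1, (Nat.find_spec h).2, fun t ht htN hx => ?_⟩
  exact Nat.find_min h htN ⟨ht, hx⟩

/-- The truncation in `cycleList` occurs exactly at the first return time `N` to `x`. -/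
theorem cycleList_eq {n : ℕ} (σ : Equiv.Perm (Fin n)) (x : Fin n) (N : ℕ) (hN : 0 < N)
    (hx : (σ ^ N) x = x) (hmin : ∀ t, 0 < t → t < N → (σ ^ t) x ≠ x) :
    cycleList σ x = (List.range N).map (fun t => (σ ^ t) x) := by
  have hinj : Set.InjOn (fun t => (σ ^ t) x) (Finset.range N : Set ℕ) := by
    have key : ∀ a b, a < b → b < N → (σ ^ a) x ≠ (σ ^ b) x := by
      intro a b hab hb h
      refine hmin (b - a) (by omega) (by omega) ?_
      have : (σ ^ b) x = (σ ^ a) ((σ ^ (b - a)) x) := by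
        rw [← Equiv.Perm.mul_apply, ← pow_add]; congr 2; omega
      rw [this] at h
      exact ((σ ^ a).injective h).symm
    intro a ha b hb h
    simp only [Finset.coe_range, Set.mem_Iio] at ha hb
    rcases lt_trichotomy a b with h1 | h1 | h1
    · exact absurd h (key a b h1 hb)
    · exact h1
    · exact absurd h.symm (key b a h1 ha)
  have hNn : N ≤ n := by
    have := Finset.card_le_card_of_injOn (s := Finset.range N) (t := (Finset.univ : Finset (Fin n)))
      (fun t => (σ ^ t) x) (by simp) hinj
    simpa using this
  obtain ⟨M, rfl⟩ : ∃ M, N = M + 1 := ⟨N - 1, by omega⟩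
  obtain ⟨r, rfl⟩ : ∃ r, n = M + (r + 1) := ⟨n - M - 1, by omega⟩
  unfold cycleList
  rw [List.range_add, List.map_append, List.takeWhile_append_of_pos]
  · rw [List.range_succ_eq_map, List.range_succ_eq_map]
    simp [hx, Function.comp_def]
  · intro a ha
    simp only [List.mem_map, List.mem_range] at ha
    obtain ⟨t, ht, rfl⟩ := ha
    simpa using hmin (t + 1) (by omega) (by omega)

theorem mem_cycleList {n : ℕ} (σ : Equiv.Perm (Fin n)) (x y : Fin n) :
    y ∈ cycleList σ x ↔ σ.SameCycle x y := by
  obtain ⟨N, hN, hx, hmin⟩ := exists_period σ x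
  rw [cycleList_eq σ x N hN hx hmin]
  simp only [List.mem_map, List.mem_range]
  constructor
  · rintro ⟨t, -, rfl⟩
    exact ⟨t, by simp⟩
  · intro h
    obtain ⟨m, hm⟩ := h.exists_nat_pow_eq
    refine ⟨m % N, Nat.mod_lt _ hN, ?_⟩
    rw [← hm]
    conv_rhs => rw [← Nat.mod_add_div m N, pow_add, Equiv.Perm.mul_apply, pow_mul]
    congr 1
    have : ∀ q : ℕ, ((σ ^ N) ^ q) x = x := by
      intro q
      induction q with
      | zero => simp
      | succ q ih => rw [pow_succ, Equiv.Perm.mul_apply, hx, ih]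
    rw [this]

theorem cycleList_congr {n : ℕ} (σ τ : Equiv.Perm (Fin n)) (x : Fin n)
    (h : ∀ y, σ.SameCycle x y → τ y = σ y) : cycleList τ x = cycleList σ x := by
  have hp : ∀ k : ℕ, (τ ^ k) x = (σ ^ k) x := by
    intro k
    induction k with
    | zero => rfl
    | succ k ih =>
      rw [pow_succ', pow_succ', Equiv.Perm.mul_apply, Equiv.Perm.mul_apply, ih]
      exact h _ ⟨k, by simp⟩
  simp only [cycleList, hp]

theorem cycleList_fixed {n : ℕ} (σ : Equiv.Perm (Fin n)) (x : Fin n) (h : σ x = x) :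
    cycleList σ x = [x] := by
  rw [cycleList_eq σ x 1 one_pos (by simpa using h) (fun t h1 h2 => by omega)]
  simp

/-- Deleting the point `i` from its cycle, where `σ j = i`: the permutation
`swap i (σ i) * σ` fixes `i` and sends `j` directly to `σ i`. -/
theorem cycleList_cut {n : ℕ} (σ : Equiv.Perm (Fin n)) (i j : Fin n) (hij : i ≠ j) (h : σ j = i) :
    cycleList σ i = i :: cycleList (Equiv.swap i (σ i) * σ) (σ i) := by
  obtain ⟨N, hN, hx, hmin⟩ := exists_period σ i
  have hii : σ i ≠ i := fun h' => hij (σ.injective (h'.trans h.symm))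
  obtain ⟨M, rfl⟩ : ∃ M, N = M + 2 := by
    refine ⟨N - 2, ?_⟩
    have : N ≠ 1 := by
      rintro rfl
      exact hii (by simpa using hx)
    omega
  set τ := Equiv.swap i (σ i) * σ with hτ
  have hinj0 : ∀ t, t < M + 1 → (σ ^ (t + 1)) i ≠ i := fun t ht => hmin _ (by omega) (by omega)
  have hpow : ∀ t, t < M + 1 → (τ ^ t) (σ i) = (σ ^ (t + 1)) i := by
    intro t
    induction t with
    | zero => intro _; simp
    | succ t ih =>
      intro ht
      rw [pow_succ', Equiv.Perm.mul_apply, ih (by omega), hτ, Equiv.Perm.mul_apply,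
        ← Equiv.Perm.mul_apply σ, ← pow_succ']
      refine Equiv.swap_apply_of_ne_of_ne (hinj0 _ ht) ?_
      intro h'
      rw [pow_succ', Equiv.Perm.mul_apply] at h'
      exact hinj0 t (by omega) (σ.injective h')
  have hend : (τ ^ (M + 1)) (σ i) = σ i := by
    rw [pow_succ', Equiv.Perm.mul_apply, hpow M (by omega), hτ, Equiv.Perm.mul_apply,
      ← Equiv.Perm.mul_apply σ, ← pow_succ']
    rw [hx, Equiv.swap_apply_left]
  have hmin' : ∀ t, 0 < t → t < M + 1 → (τ ^ t) (σ i) ≠ σ i := by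
    intro t h1 h2 h3
    rw [hpow t h2, pow_succ', Equiv.Perm.mul_apply] at h3
    exact hmin t h1 (by omega) (σ.injective h3)
  rw [cycleList_eq σ i _ hN hx hmin, cycleList_eq τ (σ i) (M + 1) (by omega) hend hmin',
    List.range_succ_eq_map]
  simp only [List.map_cons, pow_zero, Equiv.Perm.coe_one, id_eq, List.map_map, List.cons.injEq,
    true_and]
  refine List.map_congr_left fun t ht => ?_
  rw [hpow t (List.mem_range.1 ht)]
  rfl

/-! ### Permutation expansions over a subset of the indices -/

/-- The product of the entries of `A` along the cycle of `σ` starting at `x`. -/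
def cycProd {n : ℕ} {H : Type*} [Ring H] (A : Matrix (Fin n) (Fin n) H) (σ : Equiv.Perm (Fin n))
    (x : Fin n) : H :=
  ((cycleList σ x).map (fun i => A i (σ i))).prod

/-- The product, in decreasing order of leaders, of the cycle products over those leaders of `σ`
that lie in `F`. The rule `q l x` decides whether `x` leads the cycle listed as `l`. -/
def leadProd {n : ℕ} {H : Type*} [Ring H] (q : List (Fin n) → Fin n → Bool)
    (A : Matrix (Fin n) (Fin n) H) (σ : Equiv.Perm (Fin n)) (F : Finset (Fin n)) : H :=
  (((List.finRange n).filter (fun x => decide (x ∈ F) && q (cycleList σ x) x)).reverse.map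
    (cycProd A σ)).prod

/-- The elements of `S` outside the cycle of `j`. -/
def offCycle {n : ℕ} (σ : Equiv.Perm (Fin n)) (S : Finset (Fin n)) (j : Fin n) :
    Finset (Fin n) :=
  S.filter (fun x => x ∉ cycleList σ j)

/-- The permutations that move only elements of `S`. -/
def permsOn {n : ℕ} (S : Finset (Fin n)) : Finset (Equiv.Perm (Fin n)) :=
  Finset.univ.filter (fun σ => ∀ x, x ∉ S → σ x = x)

/-- The determinant-type expansion of the principal submatrix of `A` on `S`, with the product of
cycles normalized by the leader rule `q`. -/
def subDet {n : ℕ} {H : Type*} [Ring H] (q : List (Fin n) → Fin n → Bool)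
    (A : Matrix (Fin n) (Fin n) H) (S : Finset (Fin n)) : H :=
  ∑ σ ∈ permsOn S, (Equiv.Perm.sign σ : ℤ) • leadProd q A σ S

/-- For `σ j = i`: the product of the entries along the path from `i` to `j`, times `z`. -/
def pathProd {n : ℕ} {H : Type*} [Ring H] (A : Matrix (Fin n) (Fin n) H)
    (σ : Equiv.Perm (Fin n)) (i j : Fin n) (z : H) : H :=
  ((cycleList σ i).map (fun x => if x = j then z else A x (σ x))).prod

theorem mem_permsOn {n : ℕ} (S : Finset (Fin n)) (σ : Equiv.Perm (Fin n)) :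
    σ ∈ permsOn S ↔ ∀ x, x ∉ S → σ x = x := by
  simp [permsOn]

theorem apply_mem_of_permsOn {n : ℕ} {S : Finset (Fin n)} {σ : Equiv.Perm (Fin n)}
    (h : σ ∈ permsOn S) {x : Fin n} (hx : x ∈ S) : σ x ∈ S := by
  by_contra hc
  have h1 := (mem_permsOn S σ).1 h _ hc
  rw [σ.injective h1] at hc
  exact hc hx

theorem permsOn_empty {n : ℕ} : permsOn (∅ : Finset (Fin n)) = {1} := by
  ext σ
  simp [mem_permsOn, Equiv.ext_iff]

theorem subDet_empty {n : ℕ} {H : Type*} [Ring H] (q : List (Fin n) → Fin n → Bool)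
    (A : Matrix (Fin n) (Fin n) H) : subDet q A ∅ = 1 := by
  simp [subDet, permsOn_empty, leadProd]

theorem leadProd_congr {n : ℕ} {H : Type*} [Ring H] (q : List (Fin n) → Fin n → Bool)
    (A : Matrix (Fin n) (Fin n) H) (σ τ : Equiv.Perm (Fin n)) (F : Finset (Fin n))
    (h : ∀ x ∈ F, ∀ y, σ.SameCycle x y → τ y = σ y) : leadProd q A τ F = leadProd q A σ F := by
  have hc : ∀ x ∈ F, cycleList τ x = cycleList σ x := fun x hx => cycleList_congr σ τ x (h x hx)
  unfold leadProd
  have h1 : (List.finRange n).filter (fun x => decide (x ∈ F) && q (cycleList τ x) x)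
      = (List.finRange n).filter (fun x => decide (x ∈ F) && q (cycleList σ x) x) := by
    refine List.filter_congr fun x _ => ?_
    by_cases hx : x ∈ F
    · rw [hc x hx]
    · simp [hx]
  rw [h1]
  congr 1
  refine List.map_congr_left fun x hx => ?_
  have hxF : x ∈ F := by
    simp only [List.mem_reverse, List.mem_filter, Bool.and_eq_true, decide_eq_true_eq] at hx
    exact hx.2.1
  unfold cycProd
  rw [hc x hxF]
  congr 1
  refine List.map_congr_left fun y hy => ?_
  rw [h x hxF y ((mem_cycleList σ x y).1 hy)]

theorem cycProd_eq_pathProd {n : ℕ} {H : Type*} [Ring H] (A : Matrix (Fin n) (Fin n) H)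
    (σ : Equiv.Perm (Fin n)) (i j : Fin n) (h : σ j = i) :
    cycProd A σ i = pathProd A σ i j (A j i) := by
  unfold cycProd pathProd
  congr 1
  refine List.map_congr_left fun x _ => ?_
  split_ifs with hx
  · rw [hx, h]
  · rfl

theorem pathProd_self {n : ℕ} {H : Type*} [Ring H] (A : Matrix (Fin n) (Fin n) H)
    (σ : Equiv.Perm (Fin n)) (j : Fin n) (z : H) (h : σ j = j) :
    pathProd A σ j j z = z := by
  simp [pathProd, cycleList_fixed σ j h]

theorem not_mem_cycleList_cut {n : ℕ} (σ : Equiv.Perm (Fin n)) (i k : Fin n)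
    (hi : σ i = i) (hk : k ≠ i) : i ∉ cycleList σ k := by
  rw [mem_cycleList]
  intro h
  obtain ⟨m, hm⟩ := h.symm
  exact hk (by rw [← hm]; exact Equiv.Perm.zpow_apply_eq_self_of_apply_eq_self hi m)

theorem cut_apply {n : ℕ} (σ : Equiv.Perm (Fin n)) (i j x : Fin n) (h : σ j = i)
    (hxi : x ≠ i) (hxj : x ≠ j) : (Equiv.swap i (σ i) * σ) x = σ x := by
  rw [Equiv.Perm.mul_apply]
  refine Equiv.swap_apply_of_ne_of_ne ?_ ?_
  · rw [← h]; exact fun h' => hxj (σ.injective h')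
  · exact fun h' => hxi (σ.injective h')

theorem pathProd_cut {n : ℕ} {H : Type*} [Ring H] (A : Matrix (Fin n) (Fin n) H)
    (σ : Equiv.Perm (Fin n)) (i j : Fin n) (z : H) (hij : i ≠ j) (h : σ j = i) :
    pathProd A σ i j z
      = A i (σ i) * pathProd A (Equiv.swap i (σ i) * σ) (σ i) j z := by
  have hii : σ i ≠ i := fun h' => hij (σ.injective (h'.trans h.symm))
  unfold pathProd
  rw [cycleList_cut σ i j hij h, List.map_cons, List.prod_cons, if_neg hij]
  congr 2
  refine List.map_congr_left fun x hx => ?_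
  split_ifs with hxj
  · rfl
  · have hxi : x ≠ i := by
      rintro rfl
      exact not_mem_cycleList_cut _ x (σ x) (by simp) hii hx
    rw [cut_apply σ i j x h hxi hxj]

theorem cycleList_mem_iff_of_sameCycle {n : ℕ} (σ : Equiv.Perm (Fin n)) {i j : Fin n}
    (h : σ.SameCycle i j) (x : Fin n) : x ∈ cycleList σ i ↔ x ∈ cycleList σ j := by
  rw [mem_cycleList, mem_cycleList]
  exact ⟨fun h' => h.symm.trans h', fun h' => h.trans h'⟩

theorem offCycle_cut {n : ℕ} (σ : Equiv.Perm (Fin n)) (S : Finset (Fin n)) (i j : Fin n)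
    (hij : i ≠ j) (h : σ j = i) :
    offCycle (Equiv.swap i (σ i) * σ) (S.erase i) j = offCycle σ S j := by
  have hji : σ.SameCycle j i := ⟨1, by simpa using h⟩
  have hτ : (Equiv.swap i (σ i) * σ).SameCycle j (σ i) := ⟨1, by simp [h]⟩
  ext x
  simp only [offCycle, Finset.mem_filter, Finset.mem_erase]
  rw [cycleList_mem_iff_of_sameCycle _ hτ, cycleList_mem_iff_of_sameCycle _ hji,
    cycleList_cut σ i j hij h]
  simp only [List.mem_cons, not_or]
  tauto

theorem leadProd_cut {n : ℕ} {H : Type*} [Ring H] (q : List (Fin n) → Fin n → Bool)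
    (A : Matrix (Fin n) (Fin n) H)
    (σ : Equiv.Perm (Fin n)) (S : Finset (Fin n)) (i j : Fin n) (h : σ j = i) :
    leadProd q A (Equiv.swap i (σ i) * σ) (offCycle σ S j) = leadProd q A σ (offCycle σ S j) := by
  refine leadProd_congr q A σ _ _ fun x hx y hxy => ?_
  simp only [offCycle, Finset.mem_filter, mem_cycleList] at hx
  have hji : σ.SameCycle j i := ⟨1, by simpa using h⟩
  refine cut_apply σ i j y h ?_ ?_
  · rintro rfl; exact hx.2 (hji.trans hxy.symm)
  · rintro rfl; exact hx.2 hxy.symm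

theorem offCycle_fixed {n : ℕ} (σ : Equiv.Perm (Fin n)) (S : Finset (Fin n)) (j : Fin n)
    (h : σ j = j) : offCycle σ S j = S.erase j := by
  ext x
  simp [offCycle, cycleList_fixed σ j h, and_comm]

/-- Cofactor expansion. Suppose the scalars `g` and the matrices `adj` obey the recursions that
hold for principal minors and adjugates, and `subDet` agrees with `g` on proper subsets of `S`.
Then the sum over paths from `i` to `j` in `S`, weighted by the cycles avoiding the path, is the
adjugate entry `adj S i j`. The bilinear map `Φ` keeps track of where the path stands in the
noncommutative product. -/
theorem path_sum {n : ℕ} {R H : Type*} [CommRing R] [Ring H] [Algebra R H]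
    (q : List (Fin n) → Fin n → Bool) (A : Matrix (Fin n) (Fin n) H)
    (g : Finset (Fin n) → R) (adj : Finset (Fin n) → Matrix (Fin n) (Fin n) H)
    (hdiag : ∀ S, ∀ j ∈ S, adj S j j = algebraMap R H (g (S.erase j)))
    (hoff : ∀ S, ∀ i ∈ S, ∀ j ∈ S, i ≠ j →
      adj S i j = -∑ k ∈ S.erase i, A i k * adj (S.erase i) k j)
    (S : Finset (Fin n)) (IH : ∀ S', S' ⊂ S → subDet q A S' = algebraMap R H (g S'))
    (Φ : H →ₗ[R] H →ₗ[R] H) (i j : Fin n) (hi : i ∈ S) (hj : j ∈ S) (z : H) :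
    ∑ σ ∈ (permsOn S).filter (fun σ => σ j = i),
      (Equiv.Perm.sign σ : ℤ) • Φ (pathProd A σ i j z) (leadProd q A σ (offCycle σ S j))
      = Φ (adj S i j * z) 1 := by
  induction S using Finset.strongInduction generalizing Φ i with
  | H S ih =>
  by_cases hij : i = j
  · subst hij
    have hset : (permsOn S).filter (fun σ => σ i = i) = permsOn (S.erase i) := by
      ext σ
      simp only [Finset.mem_filter, mem_permsOn, Finset.mem_erase, not_and]
      constructor
      · rintro ⟨h1, h2⟩ x hx
        by_cases hxi : x = i
        · rw [hxi, h2]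
        · exact h1 x (hx hxi)
      · exact fun h => ⟨fun x hx => h x fun _ => hx, h i fun h' => absurd rfl h'⟩
    rw [hset]
    have hT := IH (S.erase i) (Finset.erase_ssubset hi)
    have : ∀ σ ∈ permsOn (S.erase i),
        (Equiv.Perm.sign σ : ℤ) • Φ (pathProd A σ i i z) (leadProd q A σ (offCycle σ S i))
        = Φ z ((Equiv.Perm.sign σ : ℤ) • leadProd q A σ (S.erase i)) := by
      intro σ hσ
      have hf : σ i = i := (mem_permsOn _ σ).1 hσ i (by simp)
      rw [pathProd_self A σ i z hf, offCycle_fixed σ S i hf, map_zsmul]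
    rw [Finset.sum_congr rfl this, ← map_sum]
    change Φ z (subDet q A (S.erase i)) = _
    rw [hT, hdiag S i hi, ← Algebra.smul_def, Algebra.algebraMap_eq_smul_one]
    simp
  · have hjS : j ∈ S.erase i := Finset.mem_erase.2 ⟨Ne.symm hij, hj⟩
    have hsub := Finset.erase_ssubset hi
    have hbij : ∑ σ ∈ (permsOn S).filter (fun σ => σ j = i),
        (Equiv.Perm.sign σ : ℤ) • Φ (pathProd A σ i j z) (leadProd q A σ (offCycle σ S j))
        = ∑ τ ∈ permsOn (S.erase i), -((Equiv.Perm.sign τ : ℤ) •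
            Φ (A i (τ j) * pathProd A τ (τ j) j z)
              (leadProd q A τ (offCycle τ (S.erase i) j))) := by
      refine Finset.sum_bij' (fun σ _ => Equiv.swap i (σ i) * σ)
        (fun τ _ => Equiv.swap i (τ j) * τ) ?_ ?_ ?_ ?_ ?_
      · intro σ hσ
        obtain ⟨h1, h2⟩ := Finset.mem_filter.1 hσ
        rw [mem_permsOn]
        intro x hx
        by_cases hxi : x = i
        · subst hxi; simp
        · have hxS : x ∉ S := fun h => hx (Finset.mem_erase.2 ⟨hxi, h⟩)
          rw [cut_apply σ i j x h2 hxi (fun h => hxS (h ▸ hj))]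
          exact (mem_permsOn S σ).1 h1 x hxS
      · intro τ hτ
        refine Finset.mem_filter.2 ⟨?_, by simp⟩
        rw [mem_permsOn]
        intro x hx
        have hxi : x ≠ i := fun h => hx (h ▸ hi)
        have hτx : τ x = x := (mem_permsOn _ τ).1 hτ x (fun h => hx (Finset.mem_of_mem_erase h))
        rw [Equiv.Perm.mul_apply, hτx]
        refine Equiv.swap_apply_of_ne_of_ne hxi ?_
        rintro rfl
        exact hx (Finset.mem_of_mem_erase (apply_mem_of_permsOn hτ hjS))
      · intro σ hσ
        obtain ⟨h1, h2⟩ := Finset.mem_filter.1 hσ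
        simp [h2, ← mul_assoc]
      · intro τ hτ
        have hf : τ i = i := (mem_permsOn _ τ).1 hτ i (by simp)
        simp [hf, ← mul_assoc]
      · intro σ hσ
        obtain ⟨h1, h2⟩ := Finset.mem_filter.1 hσ
        have hii : σ i ≠ i := fun h' => hij (σ.injective (h'.trans h2.symm))
        have e1 : (Equiv.swap i (σ i) * σ) j = σ i := by simp [h2]
        rw [e1, ← pathProd_cut A σ i j z hij h2, offCycle_cut σ S i j hij h2,
          leadProd_cut q A σ S i j h2]
        simp [Equiv.Perm.sign_mul, Equiv.Perm.sign_swap (Ne.symm hii)]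
    rw [hbij, ← Finset.sum_fiberwise_of_maps_to (s := permsOn (S.erase i)) (t := S.erase i)
      (g := fun τ => τ j) (fun τ hτ => apply_mem_of_permsOn hτ hjS)]
    have hk : ∀ k ∈ S.erase i,
        ∑ τ ∈ (permsOn (S.erase i)).filter (fun τ => τ j = k), -((Equiv.Perm.sign τ : ℤ) •
            Φ (A i (τ j) * pathProd A τ (τ j) j z)
              (leadProd q A τ (offCycle τ (S.erase i) j)))
        = -(Φ (A i k * (adj (S.erase i) k j * z)) 1) := by
      intro k hk
      have := ih (S.erase i) hsub (fun S' hS' => IH S' (hS'.trans hsub))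
        (Φ.comp (LinearMap.mulLeft R (A i k))) k hk hjS
      simp only [LinearMap.comp_apply, LinearMap.mulLeft_apply] at this
      rw [← this, ← Finset.sum_neg_distrib]
      refine Finset.sum_congr rfl fun τ hτ => ?_
      rw [(Finset.mem_filter.1 hτ).2]
    rw [Finset.sum_congr rfl hk, hoff S i hi j hj hij, Finset.sum_neg_distrib, neg_mul,
      Finset.sum_mul, map_neg, LinearMap.neg_apply, map_sum, LinearMap.sum_apply]
    simp only [mul_assoc]

/-- If in every nonempty `S` the cycle of some element can be split off on a fixed side (as
prescribed by `Φ`), then `subDet` equals the minors `g`. -/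
theorem subDet_eq {n : ℕ} {R H : Type*} [CommRing R] [Ring H] [Algebra R H]
    (q : List (Fin n) → Fin n → Bool) (A : Matrix (Fin n) (Fin n) H)
    (g : Finset (Fin n) → R) (adj : Finset (Fin n) → Matrix (Fin n) (Fin n) H)
    (hempty : g ∅ = 1)
    (hdiag : ∀ S, ∀ j ∈ S, adj S j j = algebraMap R H (g (S.erase j)))
    (hoff : ∀ S, ∀ i ∈ S, ∀ j ∈ S, i ≠ j →
      adj S i j = -∑ k ∈ S.erase i, A i k * adj (S.erase i) k j)
    (hmul : ∀ S, ∀ v ∈ S, ∑ j ∈ S, adj S v j * A j v = algebraMap R H (g S))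
    (Φ : H →ₗ[R] H →ₗ[R] H) (hΦ : ∀ u, Φ u 1 = u)
    (hsplit : ∀ S : Finset (Fin n), S.Nonempty → ∃ v ∈ S, ∀ σ ∈ permsOn S,
      leadProd q A σ S = Φ (cycProd A σ v) (leadProd q A σ (offCycle σ S v)))
    (S : Finset (Fin n)) : subDet q A S = algebraMap R H (g S) := by
  induction S using Finset.strongInduction with
  | H S ih =>
  rcases S.eq_empty_or_nonempty with rfl | hne
  · rw [subDet_empty, hempty, map_one]
  obtain ⟨v, hv, hs⟩ := hsplit S hne
  rw [← hmul S v hv]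
  unfold subDet
  have hmaps : ∀ σ ∈ permsOn S, σ⁻¹ v ∈ S := by
    intro σ hσ
    by_contra hc
    have := (mem_permsOn S σ).1 hσ _ hc
    rw [← Equiv.Perm.mul_apply, mul_inv_cancel, Equiv.Perm.one_apply] at this
    exact hc (this ▸ hv)
  rw [← Finset.sum_fiberwise_of_maps_to (t := S) (g := fun σ => σ⁻¹ v) hmaps]
  refine Finset.sum_congr rfl fun j hj => ?_
  have := path_sum q A g adj hdiag hoff S ih Φ v j hv hj (A j v)
  rw [hΦ] at this
  rw [← this]
  have hset : (permsOn S).filter (fun σ => σ⁻¹ v = j) = (permsOn S).filter (fun σ => σ j = v) := by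
    refine Finset.filter_congr fun σ _ => ?_
    rw [Equiv.Perm.inv_eq_iff_eq, eq_comm]
  rw [hset]
  refine Finset.sum_congr rfl fun σ hσ => ?_
  obtain ⟨h1, h2⟩ := Finset.mem_filter.1 hσ
  rw [hs σ h1, cycProd_eq_pathProd A σ v j h2]
  have hjv : σ.SameCycle v j := (show σ.SameCycle j v from ⟨1, by simpa using h2⟩).symm
  have : offCycle σ S v = offCycle σ S j := by
    unfold offCycle
    refine Finset.filter_congr fun x _ => ?_
    rw [cycleList_mem_iff_of_sameCycle σ hjv]
  rw [this]


/-! ### The Chen and Moore normalizations -/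

/-- The leader rule of the Chen determinant: `x` is the largest entry of its cycle. -/
def chenRule {n : ℕ} (l : List (Fin n)) (x : Fin n) : Bool := l.all (fun j => decide (j ≤ x))

/-- The leader rule of the Moore determinant: `x` is the smallest entry of its cycle. -/
def mooreRule {n : ℕ} (l : List (Fin n)) (x : Fin n) : Bool := l.all (fun j => decide (x ≤ j))

theorem sameCycle_mem {n : ℕ} {S : Finset (Fin n)} {σ : Equiv.Perm (Fin n)} (hσ : σ ∈ permsOn S)
    {x y : Fin n} (hx : x ∈ S) (h : σ.SameCycle x y) : y ∈ S := by
  obtain ⟨m, rfl⟩ := h.exists_nat_pow_eq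
  induction m with
  | zero => simpa using hx
  | succ m ih =>
    rw [pow_succ', Equiv.Perm.mul_apply]
    exact apply_mem_of_permsOn hσ (ih ⟨m, by simp⟩)

theorem chenRule_iff {n : ℕ} (σ : Equiv.Perm (Fin n)) (x : Fin n) :
    chenRule (cycleList σ x) x = true ↔ ∀ y, σ.SameCycle x y → y ≤ x := by
  simp [chenRule, mem_cycleList]

theorem mooreRule_iff {n : ℕ} (σ : Equiv.Perm (Fin n)) (x : Fin n) :
    mooreRule (cycleList σ x) x = true ↔ ∀ y, σ.SameCycle x y → x ≤ y := by
  simp [mooreRule, mem_cycleList]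

theorem leadProd_chen {n : ℕ} {H : Type*} [Ring H] (A : Matrix (Fin n) (Fin n) H)
    (S : Finset (Fin n)) (v : Fin n) (hv : v ∈ S) (hmax : ∀ x ∈ S, x ≤ v)
    (σ : Equiv.Perm (Fin n)) (hσ : σ ∈ permsOn S) :
    leadProd chenRule A σ S
      = cycProd A σ v * leadProd chenRule A σ (offCycle σ S v) := by
  unfold leadProd
  have : (List.finRange n).filter (fun x => decide (x ∈ S) && chenRule (cycleList σ x) x)
      = (List.finRange n).filter
          (fun x => decide (x ∈ offCycle σ S v) && chenRule (cycleList σ x) x) ++ [v] := by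
    refine List.Pairwise.eq_of_mem_iff (r := (· < ·))
      ((List.pairwise_lt_finRange n).filter _) ?_ ?_
    · rw [List.pairwise_append]
      refine ⟨(List.pairwise_lt_finRange n).filter _, List.pairwise_singleton _ _, ?_⟩
      intro a ha b hb
      rw [List.mem_singleton] at hb
      subst hb
      simp only [List.mem_filter, Bool.and_eq_true, decide_eq_true_eq, offCycle,
        Finset.mem_filter, mem_cycleList] at ha
      refine lt_of_le_of_ne (hmax a ha.2.1.1) ?_
      rintro rfl
      exact ha.2.1.2 (Equiv.Perm.SameCycle.refl _ _)
    · intro x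
      simp only [List.mem_filter, List.mem_finRange, Bool.and_eq_true, decide_eq_true_eq, offCycle,
        Finset.mem_filter, mem_cycleList, chenRule_iff, List.mem_append, List.mem_singleton,
        true_and]
      constructor
      · rintro ⟨h1, h2⟩
        by_cases hc : σ.SameCycle v x
        · exact Or.inr (le_antisymm (hmax x h1) (h2 v hc.symm))
        · exact Or.inl ⟨⟨h1, hc⟩, h2⟩
      · rintro (⟨⟨h1, -⟩, h2⟩ | rfl)
        · exact ⟨h1, h2⟩
        · exact ⟨hv, fun y hy => hmax y (sameCycle_mem hσ hv hy)⟩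
  rw [this]
  simp

theorem leadProd_moore {n : ℕ} {H : Type*} [Ring H] (A : Matrix (Fin n) (Fin n) H)
    (S : Finset (Fin n)) (v : Fin n) (hv : v ∈ S) (hmin : ∀ x ∈ S, v ≤ x)
    (σ : Equiv.Perm (Fin n)) (hσ : σ ∈ permsOn S) :
    leadProd mooreRule A σ S
      = leadProd mooreRule A σ (offCycle σ S v) * cycProd A σ v := by
  unfold leadProd
  have : (List.finRange n).filter (fun x => decide (x ∈ S) && mooreRule (cycleList σ x) x)
      = v :: (List.finRange n).filter
          (fun x => decide (x ∈ offCycle σ S v) && mooreRule (cycleList σ x) x) := by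
    refine List.Pairwise.eq_of_mem_iff (r := (· < ·))
      ((List.pairwise_lt_finRange n).filter _) ?_ ?_
    · rw [List.pairwise_cons]
      refine ⟨?_, (List.pairwise_lt_finRange n).filter _⟩
      intro a ha
      simp only [List.mem_filter, Bool.and_eq_true, decide_eq_true_eq, offCycle,
        Finset.mem_filter, mem_cycleList] at ha
      refine lt_of_le_of_ne (hmin a ha.2.1.1) ?_
      rintro rfl
      exact ha.2.1.2 (Equiv.Perm.SameCycle.refl _ _)
    · intro x
      simp only [List.mem_filter, List.mem_finRange, Bool.and_eq_true, decide_eq_true_eq, offCycle,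
        Finset.mem_filter, mem_cycleList, mooreRule_iff, List.mem_cons, true_and]
      constructor
      · rintro ⟨h1, h2⟩
        by_cases hc : σ.SameCycle v x
        · exact Or.inl (le_antisymm (h2 v hc.symm) (hmin x h1))
        · exact Or.inr ⟨⟨h1, hc⟩, h2⟩
      · rintro (rfl | ⟨⟨h1, -⟩, h2⟩)
        · exact ⟨hv, fun y hy => hmin y (sameCycle_mem hσ hv hy)⟩
        · exact ⟨h1, h2⟩
  rw [this]
  simp

theorem permsOn_univ {n : ℕ} : permsOn (Finset.univ : Finset (Fin n)) = Finset.univ := by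
  ext σ
  simp [mem_permsOn]

theorem prod_flatten_map {α H : Type*} [Monoid H] (l : List α) (c : α → List α) (f : α → H) :
    (((l.map c).flatten).map f).prod = (l.map (fun x => ((c x).map f).prod)).prod := by
  induction l with
  | nil => simp
  | cons a l ih => simp [Function.comp_def]

theorem Mdet_eq_subDet {n : ℕ} {H : Type*} [Ring H] (A : Matrix (Fin n) (Fin n) H) :
    Mdet A = subDet mooreRule A Finset.univ := by
  unfold Mdet subDet
  rw [permsOn_univ]
  refine Finset.sum_congr rfl fun σ _ => ?_
  rw [zsmul_eq_mul, mooreOrder, prod_flatten_map]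
  simp only [mooreLeaders, leadProd, Finset.mem_univ, decide_true, Bool.true_and]
  rfl

/-- The number of cycles of `σ`, fixed points included. -/
theorem length_chenLeaders {n : ℕ} (σ : Equiv.Perm (Fin n)) :
    (chenLeaders σ).length = (n - σ.support.card) + σ.cycleFactorsFinset.card := by
  classical
  have h0 : (chenLeaders σ).length
      = (Finset.univ.filter (fun x : Fin n => ∀ y, σ.SameCycle x y → y ≤ x)).card := by
    have hnd : (chenLeaders σ).Nodup :=
      List.nodup_reverse.2 ((List.nodup_finRange n).filter _)
    rw [← List.toFinset_card_of_nodup hnd]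
    congr 1
    ext x
    have := chenRule_iff σ x
    simp only [chenRule] at this
    simp only [chenLeaders, List.mem_toFinset, List.mem_reverse, List.mem_filter,
      List.mem_finRange, true_and, Finset.mem_filter, Finset.mem_univ, this]
  rw [h0, ← Finset.card_filter_add_card_filter_not (fun x => σ x = x), Finset.filter_filter,
    Finset.filter_filter]
  congr 1
  · have : Finset.univ.filter (fun x : Fin n => (∀ y, σ.SameCycle x y → y ≤ x) ∧ σ x = x)
        = σ.supportᶜ := by
      ext x
      simp only [Finset.mem_filter, Finset.mem_univ, true_and, Finset.mem_compl,
        Equiv.Perm.mem_support, not_not, and_iff_right_iff_imp]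
      intro hx y hy
      rw [← mem_cycleList, cycleList_fixed σ x hx, List.mem_singleton] at hy
      exact hy.le
    rw [this, Finset.card_compl, Fintype.card_fin]
  · refine Finset.card_bij (fun x _ => σ.cycleOf x) ?_ ?_ ?_
    · intro x hx
      rw [Equiv.Perm.cycleOf_mem_cycleFactorsFinset_iff, Equiv.Perm.mem_support]
      exact (Finset.mem_filter.1 hx).2.2
    · intro x hx y hy h
      obtain ⟨-, hx1, hx2⟩ := Finset.mem_filter.1 hx
      obtain ⟨-, hy1, hy2⟩ := Finset.mem_filter.1 hy
      have hs : σ.SameCycle x y := (Equiv.Perm.sameCycle_iff_cycleOf_eq_of_mem_support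
        (Equiv.Perm.mem_support.2 hx2) (Equiv.Perm.mem_support.2 hy2)).2 h
      exact le_antisymm (hy1 x hs.symm) (hx1 y hs)
    · intro c hc
      have hne : c.support.Nonempty := by
        rw [Finset.nonempty_iff_ne_empty, Ne, Equiv.Perm.support_eq_empty_iff]
        exact (Equiv.Perm.mem_cycleFactorsFinset_iff.1 hc).1.ne_one
      have hm := c.support.max'_mem hne
      have hcy := Equiv.Perm.cycle_is_cycleOf hm hc
      have hms : c.support.max' hne ∈ σ.support :=
        Equiv.Perm.mem_cycleFactorsFinset_support_le hc hm
      refine ⟨c.support.max' hne, ?_, hcy.symm⟩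
      refine Finset.mem_filter.2 ⟨Finset.mem_univ _, ?_, Equiv.Perm.mem_support.1 hms⟩
      intro y hy
      refine Finset.le_max' _ _ ?_
      rw [hcy, Equiv.Perm.mem_support_cycleOf_iff]
      exact ⟨hy, hms⟩

theorem chen_sign {n : ℕ} (σ : Equiv.Perm (Fin n)) :
    (-1 : ℤ) ^ (n - (chenLeaders σ).length) = (Equiv.Perm.sign σ : ℤ) := by
  have h1 : σ.cycleFactorsFinset.card = σ.cycleType.card := by
    simp [Equiv.Perm.cycleType_def]
  have h2 : σ.cycleType.sum = σ.support.card := Equiv.Perm.sum_cycleType σ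
  have h3 : σ.support.card ≤ n := by simpa using σ.support.card_le_univ
  have h4 : 2 * σ.cycleType.card ≤ σ.cycleType.sum := by
    have := Multiset.card_nsmul_le_sum (s := σ.cycleType) (a := 2)
      (fun x hx => Equiv.Perm.two_le_of_mem_cycleType hx)
    simpa [mul_comm] using this
  rw [Equiv.Perm.sign_of_cycleType, length_chenLeaders]
  push_cast
  rw [h1]
  have e : σ.cycleType.sum + σ.cycleType.card
      = (n - (n - σ.support.card + σ.cycleType.card)) + 2 * σ.cycleType.card := by omega
  rw [e, pow_add, pow_mul]
  simp

theorem Cdet_eq_subDet {n : ℕ} {H : Type*} [Ring H] (A : Matrix (Fin n) (Fin n) H) :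
    Cdet A = subDet chenRule A Finset.univ := by
  unfold Cdet subDet
  rw [permsOn_univ]
  refine Finset.sum_congr rfl fun σ _ => ?_
  rw [← chen_sign, zsmul_eq_mul, chenOrder, prod_flatten_map]
  simp only [chenLeaders, leadProd, Finset.mem_univ, decide_true, Bool.true_and]
  push_cast
  rfl

/-- A matrix whose principal minors `g` and adjugates `adj` satisfy the usual recursions has
both its Chen and its Moore determinant equal to the full minor. -/
theorem dets_eq_of_minors {n : ℕ} {R H : Type*} [CommRing R] [Ring H] [Algebra R H]
    (A : Matrix (Fin n) (Fin n) H)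
    (g : Finset (Fin n) → R) (adj : Finset (Fin n) → Matrix (Fin n) (Fin n) H)
    (hempty : g ∅ = 1)
    (hdiag : ∀ S, ∀ j ∈ S, adj S j j = algebraMap R H (g (S.erase j)))
    (hoff : ∀ S, ∀ i ∈ S, ∀ j ∈ S, i ≠ j →
      adj S i j = -∑ k ∈ S.erase i, A i k * adj (S.erase i) k j)
    (hmul : ∀ S, ∀ v ∈ S, ∑ j ∈ S, adj S v j * A j v = algebraMap R H (g S)) :
    Mdet A = algebraMap R H (g Finset.univ) ∧ Cdet A = algebraMap R H (g Finset.univ) := by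
  constructor
  · rw [Mdet_eq_subDet]
    refine subDet_eq mooreRule A g adj hempty hdiag hoff hmul (LinearMap.mul R H).flip (by simp)
      (fun S hS => ⟨S.min' hS, S.min'_mem hS, fun σ hσ => ?_⟩) _
    rw [leadProd_moore A S _ (S.min'_mem hS) (fun x hx => S.min'_le x hx) σ hσ]
    simp
  · rw [Cdet_eq_subDet]
    refine subDet_eq chenRule A g adj hempty hdiag hoff hmul (LinearMap.mul R H) (by simp)
      (fun S hS => ⟨S.max' hS, S.max'_mem hS, fun σ hσ => ?_⟩) _
    rw [leadProd_chen A S _ (S.max'_mem hS) (fun x hx => S.le_max' x hx) σ hσ]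
    simp

/-! ### A multiplicative determinant for quaternion matrices -/

/-- The basis `1, i, j, k` of the quaternions over `R`. -/
def quatBasis (R : Type*) [CommRing R] : Module.Basis (Fin 4) R ℍ[R] :=
  QuaternionAlgebra.basisOneIJK (-1 : R) 0 (-1)

/-- The representation of quaternion matrices over `R` by matrices over `R` of four times the
size, each entry acting on `R⁴` by left multiplication. -/
def quatRep (ι : Type*) [Fintype ι] [DecidableEq ι] (R : Type*) [CommRing R] :
    Matrix ι ι ℍ[R] →+* Matrix (ι × Fin 4) (ι × Fin 4) R :=
  (Matrix.compRingEquiv ι (Fin 4) R).toRingHom.comp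
    (RingHom.mapMatrix (Algebra.leftMulMatrix (quatBasis R)).toRingHom)

/-- The determinant of `quatRep`. It is multiplicative, and on a diagonal matrix with scalar entries
it is the fourth power of their product. -/
def quatDet {ι : Type*} [Fintype ι] [DecidableEq ι] {R : Type*} [CommRing R] :
    Matrix ι ι ℍ[R] →* R :=
  Matrix.detMonoidHom.comp (quatRep ι R).toMonoidHom

theorem quatDet_apply {ι : Type*} [Fintype ι] [DecidableEq ι] {R : Type*} [CommRing R]
    (M : Matrix ι ι ℍ[R]) : quatDet M = (quatRep ι R M).det := rfl

theorem quatRep_injective (ι : Type*) [Fintype ι] [DecidableEq ι] (R : Type*) [CommRing R] :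
    Function.Injective (quatRep ι R) := by
  intro M N h
  rw [quatRep, RingHom.comp_apply, RingHom.comp_apply] at h
  have h1 := (Matrix.compRingEquiv ι (Fin 4) R).injective h
  ext1 i j
  have h2 := congrFun (congrFun h1 i) j
  rw [RingHom.mapMatrix_apply, RingHom.mapMatrix_apply, Matrix.map_apply, Matrix.map_apply] at h2
  exact Algebra.leftMulMatrix_injective (quatBasis R) h2

theorem quatDet_one_add_mul_comm {ι : Type*} [Fintype ι] [DecidableEq ι] {R : Type*} [CommRing R]
    (M N : Matrix ι ι ℍ[R]) : quatDet (1 + M * N) = quatDet (1 + N * M) := by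
  simp only [quatDet_apply, map_add, map_mul, map_one]
  rw [Matrix.det_one_add_mul_comm]

theorem quatDet_diagonal {ι : Type*} [Fintype ι] [DecidableEq ι] {R : Type*} [CommRing R]
    (r : ι → R) : quatDet (Matrix.diagonal fun i => algebraMap R ℍ[R] (r i)) = (∏ i, r i) ^ 4 := by
  have : quatRep ι R (Matrix.diagonal fun i => algebraMap R ℍ[R] (r i))
      = Matrix.diagonal fun p => r p.1 := by
    rw [← Matrix.comp_diagonal_diagonal (fun i (_ : Fin 4) => r i), quatRep, RingHom.comp_apply,
      RingHom.mapMatrix_apply, Matrix.diagonal_map (map_zero _)]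
    change Matrix.comp _ _ _ _ _ _ = _
    congr 2
    funext i
    exact AlgHom.commutes _ _
  rw [quatDet_apply, this, Matrix.det_diagonal, Fintype.prod_prod_type]
  simp [Finset.prod_pow]

theorem quat_mul_eq_one_comm {ι : Type*} [Fintype ι] [DecidableEq ι] {R : Type*} [CommRing R]
    {M N : Matrix ι ι ℍ[R]} (h : M * N = 1) : N * M = 1 := by
  apply quatRep_injective ι R
  rw [map_mul, map_one, mul_eq_one_comm, ← map_mul, h, map_one]

/-! ### Entrywise maps of quaternions -/

/-- The map of quaternion rings applying `f` to each of the four coordinates. -/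
def quatFun {R S : Type*} [CommRing R] [CommRing S] (f : R →+* S) (q : ℍ[R]) : ℍ[S] :=
  ⟨f q.re, f q.imI, f q.imJ, f q.imK⟩

section
variable {R S : Type*} [CommRing R] [CommRing S] (f : R →+* S) (q : ℍ[R])

theorem quatFun_re : (quatFun f q).re = f q.re := rfl
theorem quatFun_imI : (quatFun f q).imI = f q.imI := rfl
theorem quatFun_imJ : (quatFun f q).imJ = f q.imJ := rfl
theorem quatFun_imK : (quatFun f q).imK = f q.imK := rfl

end

/-- `quatFun` as a ring homomorphism. -/
def quatMap {R S : Type*} [CommRing R] [CommRing S] (f : R →+* S) : ℍ[R] →+* ℍ[S] where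
  toFun := quatFun f
  map_one' := by ext <;> simp [quatFun_re, quatFun_imI, quatFun_imJ, quatFun_imK]
  map_zero' := by ext <;> simp [quatFun_re, quatFun_imI, quatFun_imJ, quatFun_imK]
  map_add' a b := by ext <;> simp [quatFun_re, quatFun_imI, quatFun_imJ, quatFun_imK]
  map_mul' a b := by ext <;> simp [quatFun_re, quatFun_imI, quatFun_imJ, quatFun_imK]

theorem quatMap_apply {R S : Type*} [CommRing R] [CommRing S] (f : R →+* S) (q : ℍ[R]) :
    quatMap f q = quatFun f q := rfl

theorem quatMap_algebraMap {R S : Type*} [CommRing R] [CommRing S] (f : R →+* S) (r : R) :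
    quatMap f (algebraMap R ℍ[R] r) = algebraMap S ℍ[S] (f r) := by
  rw [quatMap_apply, Quaternion.algebraMap_def, Quaternion.algebraMap_def]
  ext <;> simp [quatFun_re, quatFun_imI, quatFun_imJ, quatFun_imK]

theorem quatMap_star {R S : Type*} [CommRing R] [CommRing S] (f : R →+* S) (q : ℍ[R]) :
    quatMap f (star q) = star (quatMap f q) := by
  rw [quatMap_apply, quatMap_apply]
  ext <;> simp [quatFun_re, quatFun_imI, quatFun_imJ, quatFun_imK]

theorem quatMap_injective {R S : Type*} [CommRing R] [CommRing S] (f : R →+* S)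
    (hf : Function.Injective f) : Function.Injective (quatMap f) := by
  intro a b h
  have h1 := congrArg QuaternionAlgebra.re h
  have h2 := congrArg QuaternionAlgebra.imI h
  have h3 := congrArg QuaternionAlgebra.imJ h
  have h4 := congrArg QuaternionAlgebra.imK h
  exact Quaternion.ext _ _ (hf h1) (hf h2) (hf h3) (hf h4)

theorem eq_algebraMap_of_star_eq {R : Type*} [CommRing R] (h2 : IsUnit (2 : R)) (q : ℍ[R])
    (hq : star q = q) : q = algebraMap R ℍ[R] q.re := by
  have key : ∀ x : R, -x = x → x = 0 := by
    intro x hx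
    have : 2 * x = 2 * 0 := by linear_combination -hx
    exact h2.mul_left_cancel this
  rw [Quaternion.algebraMap_def]
  ext
  · simp
  · simpa using key q.imI (by simpa using congrArg QuaternionAlgebra.imI hq)
  · simpa using key q.imJ (by simpa using congrArg QuaternionAlgebra.imJ hq)
  · simpa using key q.imK (by simpa using congrArg QuaternionAlgebra.imK hq)

/-! ### Principal submatrices of a Hermitian matrix -/

/-- The principal submatrix of `A` on `S`, padded by the identity outside `S`. -/
def padded {n : ℕ} {H : Type*} [Ring H] (A : Matrix (Fin n) (Fin n) H) (S : Finset (Fin n)) :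
    Matrix (Fin n) (Fin n) H :=
  Matrix.of fun i j => if i ∈ S ∧ j ∈ S then A i j else if i = j then 1 else 0

/-- The off-diagonal part, within `S`, of row `v` of `A`. -/
def rowPart {n : ℕ} {H : Type*} [Ring H] (A : Matrix (Fin n) (Fin n) H) (S : Finset (Fin n))
    (v : Fin n) : Matrix (Fin n) (Fin n) H :=
  Matrix.of fun i j => if i = v ∧ j ∈ S.erase v then A v j else 0

/-- The Schur complement factorization in terms of ring elements: `B` is the matrix with the index
of the projection `E` replaced by an identity block, `C` its inverse, `α` and `α'` the off-diagonal
row and column at that index, and `Y` the pivot minus one. -/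
theorem schur_factor {M : Type*} [Ring M] (B C E α α' Y : M) (hBC : B * C = 1)
    (hCB : C * B = 1) (hEB : E * B = E) (hBE : B * E = E) (hαE : α * E = 0) (hEα' : E * α' = 0)
    (hEY : E * Y = Y) (hYE : Y * E = Y) :
    B + α + α' + α * C * α' + Y = (1 + α * C) * (B + Y) * (1 + C * α') := by
  have hCE : C * E = E := by rw [← hBE, ← mul_assoc, hCB, one_mul, hBE]
  have hEC : E * C = E := by rw [← hEB, mul_assoc, hBC, mul_one, hEB]
  have h1 : α * C * Y = 0 := by
    rw [← hEY, mul_assoc, ← mul_assoc C, hCE, ← mul_assoc, hαE, zero_mul]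
  have h2 : Y * (C * α') = 0 := by
    rw [← hYE, mul_assoc, ← mul_assoc E, hEC, hEα', mul_zero]
  have h3 : α * C * B = α := by rw [mul_assoc, hCB, mul_one]
  have h4 : B * (C * α') = α' := by rw [← mul_assoc, hBC, one_mul]
  have h5 : (1 + α * C) * (B + Y) = B + Y + α := by
    rw [add_mul, one_mul, mul_add, h3, h1, add_zero]
  rw [h5, mul_add, mul_one, add_mul, add_mul, h4, h2]
  noncomm_ring

/-- One step of Gaussian elimination. The Schur complement at `v` is Hermitian of size one, hence a
scalar. The conclusion gives this pivot `d`, the value of `quatDet`, and the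
`v`-th row equation from which row `v` of the inverse of `padded A S` can be read off. -/
theorem pivot_step {n : ℕ} {R K : Type*} [CommRing R] [CommRing K] (c : R →+* K) [IsLocalHom c]
    (h2 : IsUnit (2 : R)) (A : Matrix (Fin n) (Fin n) ℍ[R]) (hA : Aᴴ = A)
    (hc : A.map (quatMap c) = 1) (S : Finset (Fin n)) (v : Fin n) (hv : v ∈ S)
    (C : Matrix (Fin n) (Fin n) ℍ[R]) (hBC : padded A (S.erase v) * C = 1)
    (hCB : C * padded A (S.erase v) = 1) :
    ∃ d : R, c d = 1 ∧ quatDet (padded A S) = quatDet (padded A (S.erase v)) * d ^ 4 ∧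
      IsUnit (padded A S) ∧
      Matrix.single v v 1 * (1 - rowPart A S v * C) * padded A S = d • Matrix.single v v 1 ∧
      rowPart A S v * C * Matrix.single v v 1 = 0 := by
  set B := padded A (S.erase v) with hB
  set E : Matrix (Fin n) (Fin n) ℍ[R] := Matrix.single v v 1 with hE
  set α := rowPart A S v with hα
  have hherm : ∀ i j, star (A i j) = A j i := fun i j => by
    have := congrFun (congrFun hA j) i
    simpa [Matrix.conjTranspose_apply] using this
  have hBs : star B = B := by
    ext1 i j
    rw [Matrix.star_apply, hB]
    simp only [padded, Matrix.of_apply]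
    by_cases h : i ∈ S.erase v ∧ j ∈ S.erase v
    · rw [if_pos h, if_pos h.symm, hherm]
    · rw [if_neg h, if_neg (fun h' => h h'.symm)]
      by_cases hij : i = j
      · simp [hij]
      · simp [hij, Ne.symm hij]
  have hEs : star E = E := by
    rw [hE, Matrix.star_eq_conjTranspose, Matrix.conjTranspose_single, star_one]
  have hEE : E * E = E := by simp [hE]
  have hEB : E * B = E := by
    ext1 i j
    by_cases hi : i = v
    · subst hi
      rw [hE, Matrix.single_mul_apply_same, one_mul, hB]
      simp [padded, Matrix.single_apply]
    · rw [hE, Matrix.single_mul_apply_of_ne _ _ _ _ _ hi]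
      simp [Ne.symm hi]
  have hBE : B * E = E := by
    have := congrArg star hEB
    rwa [star_mul, hBs, hEs] at this
  have hαE : α * E = 0 := by
    ext1 i j
    by_cases hj : j = v
    · subst hj
      rw [hE, Matrix.mul_single_apply_same, hα]
      simp [rowPart]
    · rw [hE, Matrix.mul_single_apply_of_ne _ _ _ _ _ hj]
      rfl
  have hEα : E * α = α := by
    ext1 i j
    by_cases hi : i = v
    · subst hi
      rw [hE, Matrix.single_mul_apply_same, one_mul]
    · rw [hE, Matrix.single_mul_apply_of_ne _ _ _ _ _ hi, hα]
      simp [rowPart, hi]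
  have hEα' : E * star α = 0 := by
    have := congrArg star hαE
    rwa [star_mul, hEs, star_zero] at this
  have hα'E : star α * E = star α := by
    have := congrArg star hEα
    rwa [star_mul, hEs] at this
  have hCs : star C = C := by
    have h1 : B * star C = 1 := by
      have := congrArg star hCB
      rwa [star_mul, hBs, star_one] at this
    calc star C = C * B * star C := by rw [hCB, one_mul]
      _ = C := by rw [mul_assoc, h1, mul_one]
  have hCE : C * E = E := by rw [← hBE, ← mul_assoc, hCB, one_mul, hBE]
  set X := α * C * star α with hX
  have hXs : star X = X := by
    rw [hX, star_mul, star_mul, star_star, hCs, mul_assoc]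
  have hXE : X = Matrix.single v v (X v v) := by
    have h1 : E * X * E = X := by
      rw [hX, mul_assoc, mul_assoc, mul_assoc, hα'E, ← mul_assoc, hEα, mul_assoc]
    rw [hE, Matrix.single_mul_mul_single, one_mul, mul_one] at h1
    exact h1.symm
  set d : R := (A v v - X v v).re with hd
  have hdq : A v v - X v v = algebraMap R ℍ[R] d := by
    refine eq_algebraMap_of_star_eq h2 _ ?_
    rw [star_sub, hherm]
    have := congrFun (congrFun hXs v) v
    rw [Matrix.star_apply] at this
    rw [this]
  have hcv : ∀ j, quatMap c (A v j) = if v = j then 1 else 0 := by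
    intro j
    have := congrFun (congrFun hc v) j
    rwa [Matrix.map_apply, Matrix.one_apply] at this
  have hcd : c d = 1 := by
    have hα0 : α.map (quatMap c) = 0 := by
      ext1 i j
      rw [Matrix.map_apply, hα]
      simp only [rowPart, Matrix.of_apply]
      split_ifs with h
      · rw [hcv, if_neg (Finset.ne_of_mem_erase h.2).symm]; rfl
      · rw [map_zero]; rfl
    have hX0 : quatMap c (X v v) = 0 := by
      have : X.map (quatMap c) = 0 := by
        rw [hX, Matrix.map_mul, Matrix.map_mul, hα0, zero_mul, zero_mul]
      exact congrFun (congrFun this v) v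
    have h1 := congrArg (quatMap c) hdq
    rw [map_sub, hX0, hcv, if_pos rfl, sub_zero, quatMap_algebraMap] at h1
    have := congrArg QuaternionAlgebra.re h1
    simpa [Quaternion.algebraMap_def] using this.symm
  have hdu : IsUnit d := isUnit_of_map_unit c d (by rw [hcd]; exact isUnit_one)
  set Y : Matrix (Fin n) (Fin n) ℍ[R] := (d - 1) • E with hY
  have hEY : E * Y = Y := by rw [hY, mul_smul_comm, hEE]
  have hYE : Y * E = Y := by rw [hY, smul_mul_assoc, hEE]
  have hS : padded A S = B + α + star α + X + Y := by
    have hY' : Y = Matrix.single v v (A v v - X v v - 1) := by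
      rw [hY, hE, Matrix.smul_single, hdq, Algebra.smul_def, mul_one, map_sub, map_one]
    rw [hY', add_assoc _ X]
    have hXY : X + Matrix.single v v (A v v - X v v - 1) = Matrix.single v v (A v v - 1) := by
      calc X + Matrix.single v v (A v v - X v v - 1)
          = Matrix.single v v (X v v) + Matrix.single v v (A v v - X v v - 1) := by rw [← hXE]
        _ = _ := by
          rw [← Matrix.single_add]
          congr 1
          abel
    rw [hXY]
    ext1 i j
    simp only [padded, Matrix.of_apply, Matrix.add_apply, Matrix.star_apply, hB, hα, rowPart,
      Matrix.single_apply, Finset.mem_erase]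
    by_cases hi : i = v <;> by_cases hj : j = v
    · subst hi; subst hj; simp [hv]
    · subst hi; simp [hv, hj, Ne.symm hj]
    · subst hj; simp [hv, hi, Ne.symm hi, hherm, apply_ite star]
    · simp [hi, hj, Ne.symm hi]
  have hfac : padded A S = (1 + α * C) * (B + Y) * (1 + C * star α) := by
    rw [hS]
    exact schur_factor B C E α (star α) Y hBC hCB hEB hBE hαE hEα' hEY hYE
  have hαCE : α * C * E = 0 := by rw [mul_assoc, hCE, hαE]
  have hECα' : E * (C * star α) = 0 := by
    have := congrArg star hαCE
    rwa [star_mul, star_mul, hEs, hCs, star_zero] at this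
  have hN2 : α * C * (α * C) = 0 := by
    have : α * C * α = 0 := by
      calc α * C * α = α * C * E * α := by rw [mul_assoc (α * C), hEα]
        _ = 0 := by rw [hαCE, zero_mul]
    rw [← mul_assoc, this, zero_mul]
  have hBY : B + Y = B * (1 + Y) := by
    rw [mul_add, mul_one, hY, mul_smul_comm, hBE]
  have hdiag : 1 + Y = Matrix.diagonal fun i => algebraMap R ℍ[R] (if i = v then d else 1) := by
    ext1 i j
    rw [hY, hE, Matrix.add_apply, Matrix.smul_apply, Matrix.single_apply, Matrix.one_apply,
      Matrix.diagonal_apply]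
    by_cases hij : i = j
    · subst hij
      by_cases hi : i = v
      · subst hi; simp [Algebra.smul_def]
      · simp [hi, Ne.symm hi]
    · have : ¬(v = i ∧ v = j) := fun h => hij (h.1.symm.trans h.2)
      simp [hij, this]
  have hpr : ∏ i : Fin n, (if i = v then d else 1) = d := by simp
  have hδ1 : quatDet (1 + α * C) = 1 := by
    rw [← hEα, mul_assoc, quatDet_one_add_mul_comm, hαCE, add_zero, map_one]
  have hδ2 : quatDet (1 + C * star α) = 1 := by
    rw [← hα'E, ← mul_assoc, quatDet_one_add_mul_comm, hECα', add_zero, map_one]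
  have h1 : (1 - α * C) * (1 + α * C) = 1 := by
    rw [sub_mul, one_mul, mul_add, mul_one, hN2]; simp
  refine ⟨d, hcd, ?_, ?_, ?_, hαCE⟩
  · rw [hfac, map_mul, map_mul, hδ1, hδ2, hBY, map_mul, hdiag, quatDet_diagonal, hpr]
    ring
  · have hu : IsUnit (1 + α * C) :=
      ⟨⟨1 + α * C, 1 - α * C, by rw [mul_sub, mul_one, add_mul, one_mul, hN2]; simp, h1⟩, rfl⟩
    have hu' : IsUnit (1 + C * star α) := by
      have := hu.star
      rwa [star_add, star_one, star_mul, hCs] at this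
    have hY1 : IsUnit (1 + Y) := by
      rw [hdiag]
      refine IsUnit.map (Matrix.diagonalRingHom (Fin n) ℍ[R]) (Pi.isUnit_iff.2 fun i => ?_)
      refine IsUnit.map (algebraMap R ℍ[R]) ?_
      split_ifs
      · exact hdu
      · exact isUnit_one
    rw [hfac, hBY]
    exact (hu.mul (IsUnit.mul ⟨⟨B, C, hBC, hCB⟩, rfl⟩ hY1)).mul hu'
  · rw [hfac, mul_assoc E, mul_assoc (1 + α * C), ← mul_assoc (1 - α * C), h1, one_mul,
      ← mul_assoc, mul_add E, hEB, hEY, mul_add, mul_one]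
    have h3 : E + Y = d • E := by rw [hY, sub_smul, one_smul]; abel
    rw [h3, smul_mul_assoc, hECα', smul_zero, add_zero]

/-- Fourth roots with image `1` under the local homomorphism `c` are unique. -/
theorem fourth_root_unique {R K : Type*} [CommRing R] [CommRing K] (c : R →+* K) [IsLocalHom c]
    (h2 : IsUnit (2 : R)) {h k : R} (hh : c h = 1) (hk : c k = 1) (e : h ^ 4 = k ^ 4) : h = k := by
  have h2' : IsUnit (1 + 1 : K) := by
    have := h2.map c
    rwa [← one_add_one_eq_two, map_add, map_one] at this
  have u1 : IsUnit (h + k) := isUnit_of_map_unit c _ (by rw [map_add, hh, hk]; exact h2')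
  have u2 : IsUnit (h ^ 2 + k ^ 2) :=
    isUnit_of_map_unit c _ (by rw [map_add, map_pow, map_pow, hh, hk, one_pow]; exact h2')
  have : (h + k) * (h ^ 2 + k ^ 2) * h = (h + k) * (h ^ 2 + k ^ 2) * k := by
    linear_combination e
  exact (u1.mul u2).mul_left_cancel this

theorem padded_empty {n : ℕ} {H : Type*} [Ring H] (A : Matrix (Fin n) (Fin n) H) :
    padded A ∅ = 1 := by
  ext1 i j
  simp [padded, Matrix.one_apply]

theorem padded_univ {n : ℕ} {H : Type*} [Ring H] (A : Matrix (Fin n) (Fin n) H) :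
    padded A Finset.univ = A := by
  ext1 i j
  simp [padded]

/-- The padded principal submatrices are invertible and their `quatDet` is a fourth power; `g` plays
the role of the principal minor. -/
theorem exists_minor {n : ℕ} {R K : Type*} [CommRing R] [CommRing K] (c : R →+* K) [IsLocalHom c]
    (h2 : IsUnit (2 : R)) (A : Matrix (Fin n) (Fin n) ℍ[R]) (hA : Aᴴ = A)
    (hc : A.map (quatMap c) = 1) (S : Finset (Fin n)) :
    ∃ (C : Matrix (Fin n) (Fin n) ℍ[R]) (g : R), padded A S * C = 1 ∧ C * padded A S = 1 ∧
      c g = 1 ∧ quatDet (padded A S) = g ^ 4 := by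
  induction S using Finset.strongInduction with
  | H S ih =>
  rcases S.eq_empty_or_nonempty with rfl | ⟨v, hv⟩
  · exact ⟨1, 1, by rw [padded_empty, one_mul], by rw [padded_empty, one_mul], map_one c,
      by rw [padded_empty, map_one, one_pow]⟩
  · obtain ⟨C, g, h1, h3, h4, h5⟩ := ih _ (Finset.erase_ssubset hv)
    obtain ⟨d, hd, hdet, hu, -, -⟩ := pivot_step c h2 A hA hc S v hv C h1 h3
    obtain ⟨u, hu⟩ := hu
    refine ⟨(u⁻¹ : (Matrix (Fin n) (Fin n) ℍ[R])ˣ), g * d, ?_, ?_, ?_, ?_⟩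
    · rw [← hu, Units.mul_inv]
    · rw [← hu, Units.inv_mul]
    · rw [map_mul, h4, hd, one_mul]
    · rw [hdet, h5, mul_pow]

/-- For a Hermitian quaternion matrix over `R` that is the identity modulo the kernel of the local
homomorphism `c`, both determinants equal the fourth root of `quatDet A` congruent to `1`. -/
theorem dets_of_local {n : ℕ} {R K : Type*} [CommRing R] [CommRing K] (c : R →+* K) [IsLocalHom c]
    (h2 : IsUnit (2 : R)) (A : Matrix (Fin n) (Fin n) ℍ[R]) (hA : Aᴴ = A)
    (hc : A.map (quatMap c) = 1) (r : R) (hr : c r = 1) (hdet : quatDet A = r ^ 4) :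
    Mdet A = algebraMap R ℍ[R] r ∧ Cdet A = algebraMap R ℍ[R] r := by
  choose C g hBC hCB hg hgdet using exists_minor c h2 A hA hc
  have hru : g Finset.univ = r :=
    fourth_root_unique c h2 (hg _) hr (by rw [← hgdet, padded_univ, hdet])
  -- Row `v` of the inverse of `padded A S`, expressed through the inverse of `padded A (S.erase v)`.
  have hrow : ∀ S, ∀ v ∈ S, ∀ j, g S • C S v j
      = g (S.erase v) • ((if v = j then 1 else 0) - (rowPart A S v * C (S.erase v)) v j) ∧
      (rowPart A S v * C (S.erase v)) v v = 0 := by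
    intro S v hv j
    obtain ⟨d, hd, hdet', -, hE, h0⟩ := pivot_step c h2 A hA hc S v hv _ (hBC _) (hCB _)
    have hgS : g S = g (S.erase v) * d := by
      refine fourth_root_unique c h2 (hg _) (by rw [map_mul, hg, hd, one_mul]) ?_
      rw [← hgdet, hdet', hgdet, mul_pow]
    constructor
    · have h3 := congrArg (fun M => M * C S) hE
      simp only [mul_assoc, hBC, mul_one, smul_mul_assoc] at h3
      have h4 := congrFun (congrFun h3 v) j
      rw [Matrix.single_mul_apply_same, Matrix.smul_apply, Matrix.single_mul_apply_same, one_mul,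
        one_mul, Matrix.sub_apply, Matrix.one_apply] at h4
      rw [hgS, mul_smul, ← h4]
    · have := congrFun (congrFun h0 v) v
      rwa [Matrix.mul_single_apply_same, mul_one] at this
  have hrowmul : ∀ S v j, (rowPart A S v * C (S.erase v)) v j
      = ∑ k ∈ S.erase v, A v k * C (S.erase v) k j := by
    intro S v j
    rw [Matrix.mul_apply, ← Finset.sum_subset (Finset.subset_univ (S.erase v))]
    · refine Finset.sum_congr rfl fun k hk => ?_
      simp only [rowPart, Matrix.of_apply, true_and, if_pos hk]
    · intro k _ hk
      simp only [rowPart, Matrix.of_apply, true_and, if_neg hk, zero_mul]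
  rw [← hru]
  refine dets_eq_of_minors A g (fun S => g S • C S) ?_ ?_ ?_ ?_
  · refine fourth_root_unique c h2 (hg _) (map_one c) ?_
    rw [← hgdet, padded_empty, map_one, one_pow]
  · intro S j hj
    obtain ⟨h3, h4⟩ := hrow S j hj j
    rw [Matrix.smul_apply, h3, h4, if_pos rfl, sub_zero, Algebra.algebraMap_eq_smul_one]
  · intro S i hi j hj hij
    obtain ⟨h3, -⟩ := hrow S i hi j
    rw [Matrix.smul_apply, h3, if_neg hij, zero_sub, smul_neg, hrowmul, Finset.smul_sum]
    congr 1
    refine Finset.sum_congr rfl fun k _ => ?_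
    rw [Matrix.smul_apply, mul_smul_comm]
  · intro S v hv
    have h3 := congrFun (congrFun (hCB S) v) v
    rw [Matrix.one_apply_eq, Matrix.mul_apply] at h3
    rw [Algebra.algebraMap_eq_smul_one, ← h3, Finset.smul_sum,
      ← Finset.sum_subset (Finset.subset_univ S)]
    · refine Finset.sum_congr rfl fun j hj => ?_
      rw [Matrix.smul_apply, smul_mul_assoc]
      simp only [padded, Matrix.of_apply, if_pos (And.intro hj hv)]
    · intro j _ hj
      have hjv : j ≠ v := fun h => hj (h ▸ hv)
      simp [padded, hj, hjv]

/-! ### Deformation to the identity matrix -/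

theorem Mdet_map {n : ℕ} {H H' : Type*} [Ring H] [Ring H'] (f : H →+* H')
    (A : Matrix (Fin n) (Fin n) H) : Mdet (A.map f) = f (Mdet A) := by
  simp only [Mdet, map_sum, map_mul, map_intCast, map_list_prod, List.map_map]
  rfl

theorem Cdet_map {n : ℕ} {H H' : Type*} [Ring H] [Ring H'] (f : H →+* H')
    (A : Matrix (Fin n) (Fin n) H) : Cdet (A.map f) = f (Cdet A) := by
  simp only [Cdet, map_sum, map_mul, map_pow, map_neg, map_one, map_list_prod, List.map_map]
  rfl

/-- The matrix `1 + t (A - 1)`, with `A` carried along the coefficient map `κ`. -/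
def deform {n : ℕ} {K R : Type*} [CommRing K] [CommRing R] (κ : K →+* R) (t : R)
    (A : Matrix (Fin n) (Fin n) ℍ[K]) : Matrix (Fin n) (Fin n) ℍ[R] :=
  1 + t • (A.map (quatMap κ) - 1)

theorem quatMap_smul {R S : Type*} [CommRing R] [CommRing S] (f : R →+* S) (r : R) (q : ℍ[R]) :
    quatMap f (r • q) = f r • quatMap f q := by
  rw [Algebra.smul_def, Algebra.smul_def, map_mul, quatMap_algebraMap]

theorem deform_map {n : ℕ} {K R S : Type*} [CommRing K] [CommRing R] [CommRing S] (κ : K →+* R)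
    (t : R) (f : R →+* S) (A : Matrix (Fin n) (Fin n) ℍ[K]) :
    (deform κ t A).map (quatMap f) = deform (f.comp κ) (f t) A := by
  ext1 i j
  simp only [deform, Matrix.map_apply, Matrix.add_apply, Matrix.smul_apply, Matrix.sub_apply,
    map_add, quatMap_smul, map_sub, Matrix.one_apply, apply_ite (quatMap f), map_one, map_zero]
  rfl

theorem deform_zero {n : ℕ} {K R : Type*} [CommRing K] [CommRing R] (κ : K →+* R)
    (A : Matrix (Fin n) (Fin n) ℍ[K]) : deform κ 0 A = 1 := by
  simp [deform]

theorem deform_one {n : ℕ} {K : Type*} [CommRing K] (A : Matrix (Fin n) (Fin n) ℍ[K]) :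
    deform (RingHom.id K) 1 A = A := by
  rw [deform, one_smul, add_sub_cancel]
  rfl

theorem conjTranspose_map_quatMap {n : ℕ} {K R : Type*} [CommRing K] [CommRing R] (κ : K →+* R)
    (A : Matrix (Fin n) (Fin n) ℍ[K]) : (A.map (quatMap κ))ᴴ = Aᴴ.map (quatMap κ) := by
  ext1 i j
  simp [Matrix.conjTranspose_apply, quatMap_star]

theorem deform_conjTranspose {n : ℕ} {K R : Type*} [CommRing K] [CommRing R] (κ : K →+* R) (t : R)
    (A : Matrix (Fin n) (Fin n) ℍ[K]) (hA : Aᴴ = A) : (deform κ t A)ᴴ = deform κ t A := by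
  have hs : ∀ M : Matrix (Fin n) (Fin n) ℍ[R], (t • M)ᴴ = t • Mᴴ := by
    intro M
    ext1 i j
    simp [Matrix.conjTranspose_apply]
  rw [deform, Matrix.conjTranspose_add, hs, Matrix.conjTranspose_sub, Matrix.conjTranspose_one,
    conjTranspose_map_quatMap, hA]

/-- If `U` diagonalizes `A` then it diagonalizes its deformation as well. -/
theorem quatDet_deform {n : ℕ} {K R : Type*} [CommRing K] [CommRing R] (κ : K →+* R) (t : R)
    (A U : Matrix (Fin n) (Fin n) ℍ[K]) (lam : Fin n → K) (hU : Uᴴ * U = 1)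
    (hD : U * A * Uᴴ = Matrix.diagonal fun i => algebraMap K ℍ[K] (lam i)) :
    quatDet (deform κ t A) = (∏ i, (1 + t * (κ (lam i) - 1))) ^ 4 := by
  set V := U.map (quatMap κ) with hV
  have hVV : Vᴴ * V = 1 := by
    rw [hV, conjTranspose_map_quatMap, ← Matrix.map_mul, hU]
    exact Matrix.map_one _ (map_zero _) (map_one _)
  have hVV' : V * Vᴴ = 1 := quat_mul_eq_one_comm hVV
  have hVD : V * A.map (quatMap κ) * Vᴴ
      = Matrix.diagonal fun i => algebraMap R ℍ[R] (κ (lam i)) := by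
    rw [hV, conjTranspose_map_quatMap, ← Matrix.map_mul, ← Matrix.map_mul, hD,
      Matrix.diagonal_map (map_zero _)]
    congr 1
    funext i
    exact quatMap_algebraMap κ _
  have hcon : V * deform κ t A * Vᴴ
      = Matrix.diagonal fun i => algebraMap R ℍ[R] (1 + t * (κ (lam i) - 1)) := by
    rw [deform, mul_add, add_mul, mul_one, hVV', mul_smul_comm, smul_mul_assoc, mul_sub, sub_mul,
      mul_one, hVV', hVD]
    ext1 i j
    by_cases hij : i = j
    · subst hij
      rw [Matrix.add_apply, Matrix.smul_apply, Matrix.sub_apply, Matrix.diagonal_apply_eq,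
        Matrix.diagonal_apply_eq, Matrix.one_apply_eq, Algebra.smul_def, map_add, map_mul, map_sub,
        map_one]
    · simp [hij]
  calc quatDet (deform κ t A) = quatDet (Vᴴ * V) * quatDet (deform κ t A) := by
        rw [hVV, map_one, one_mul]
    _ = quatDet (V * deform κ t A * Vᴴ) := by
        rw [map_mul, map_mul, map_mul]; ring
    _ = _ := by rw [hcon, quatDet_diagonal]

/-- The theorem for quaternion matrices over a commutative ring in which `2` is invertible. -/
theorem dets_of_diagonalization {n : ℕ} {K : Type*} [CommRing K] (h2 : IsUnit (2 : K))
    (A U : Matrix (Fin n) (Fin n) ℍ[K]) (hA : Aᴴ = A) (lam : Fin n → K) (hU : Uᴴ * U = 1)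
    (hD : U * A * Uᴴ = Matrix.diagonal fun i => algebraMap K ℍ[K] (lam i)) :
    Mdet A = algebraMap K ℍ[K] (∏ i, lam i) ∧ Cdet A = algebraMap K ℍ[K] (∏ i, lam i) := by
  have : IsLocalHom (PowerSeries.constantCoeff (R := K)) :=
    ⟨fun φ h => PowerSeries.isUnit_iff_constantCoeff.2 h⟩
  set ps : Polynomial K →+* PowerSeries K := Polynomial.coeToPowerSeries.ringHom with hps
  have hpsinj : Function.Injective (quatMap ps) :=
    quatMap_injective ps (by intro a b h; exact Polynomial.coe_injective K h)
  set A₂ := deform Polynomial.C Polynomial.X A with hA₂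
  set p : Polynomial K := ∏ i, (1 + Polynomial.X * (Polynomial.C (lam i) - 1)) with hp
  have h2' : IsUnit (2 : PowerSeries K) := by
    have := h2.map (PowerSeries.C (R := K))
    rwa [map_ofNat] at this
  have hmap : A₂.map (quatMap ps) = deform (ps.comp Polynomial.C) (ps Polynomial.X) A :=
    deform_map _ _ _ _
  have hX : PowerSeries.constantCoeff (ps Polynomial.X) = 0 := by
    simp [hps]
  have hps_p : ps p = ∏ i, (1 + ps Polynomial.X * ((ps.comp Polynomial.C) (lam i) - 1)) := by
    simp [hp, map_prod]
  have hone : PowerSeries.constantCoeff (ps p) = 1 := by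
    rw [hps_p, map_prod]
    refine Finset.prod_eq_one fun i _ => ?_
    rw [map_add, map_mul, hX, zero_mul, add_zero, map_one]
  obtain ⟨hM, hC⟩ := dets_of_local (PowerSeries.constantCoeff (R := K)) h2'
    (A₂.map (quatMap ps)) (by rw [hmap]; exact deform_conjTranspose _ _ A hA)
    (by rw [hmap, deform_map, hX, deform_zero]) (ps p) hone
    (by rw [hmap, quatDet_deform _ _ A U lam hU hD, hps_p])
  rw [Mdet_map, ← quatMap_algebraMap] at hM
  rw [Cdet_map, ← quatMap_algebraMap] at hC
  have hM' := hpsinj hM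
  have hC' := hpsinj hC
  -- Specialize the deformation parameter to `1`.
  set ev : Polynomial K →+* K := Polynomial.evalRingHom 1 with hev
  have hA1 : A₂.map (quatMap ev) = A := by
    rw [hA₂, deform_map]
    have h3 : ev.comp Polynomial.C = RingHom.id K := by
      ext x; simp [hev]
    have h4 : ev Polynomial.X = 1 := by simp [hev]
    rw [h3, h4, deform_one]
  have hp1 : ev p = ∏ i, lam i := by
    simp [hev, hp]
  rw [← hA1, Mdet_map, Cdet_map, hM', hC', quatMap_algebraMap, hp1]
  exact ⟨rfl, rfl⟩

/-! ### Dual quaternions as quaternions over the dual numbers -/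

/-- The coordinates of a dual quaternion, regarded as dual numbers. -/
def dqFun (q : DualQuaternion) : ℍ[DualNumber ℝ] :=
  ⟨TrivSqZeroExt.inl q.fst.re + TrivSqZeroExt.inr q.snd.re,
   TrivSqZeroExt.inl q.fst.imI + TrivSqZeroExt.inr q.snd.imI,
   TrivSqZeroExt.inl q.fst.imJ + TrivSqZeroExt.inr q.snd.imJ,
   TrivSqZeroExt.inl q.fst.imK + TrivSqZeroExt.inr q.snd.imK⟩

theorem dqFun_re (q : DualQuaternion) :
    (dqFun q).re = TrivSqZeroExt.inl q.fst.re + TrivSqZeroExt.inr q.snd.re := rfl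
theorem dqFun_imI (q : DualQuaternion) :
    (dqFun q).imI = TrivSqZeroExt.inl q.fst.imI + TrivSqZeroExt.inr q.snd.imI := rfl
theorem dqFun_imJ (q : DualQuaternion) :
    (dqFun q).imJ = TrivSqZeroExt.inl q.fst.imJ + TrivSqZeroExt.inr q.snd.imJ := rfl
theorem dqFun_imK (q : DualQuaternion) :
    (dqFun q).imK = TrivSqZeroExt.inl q.fst.imK + TrivSqZeroExt.inr q.snd.imK := rfl

/-- The identification of the dual quaternions with the quaternions over the dual numbers. -/
def dqHom : DualQuaternion →+* ℍ[DualNumber ℝ] where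
  toFun := dqFun
  map_one' := by
    ext <;> simp [dqFun_re, dqFun_imI, dqFun_imJ, dqFun_imK]
  map_zero' := by
    ext <;> simp [dqFun_re, dqFun_imI, dqFun_imJ, dqFun_imK]
  map_add' a b := by
    ext <;> simp [dqFun_re, dqFun_imI, dqFun_imJ, dqFun_imK]
  map_mul' a b := by
    ext <;> simp [dqFun_re, dqFun_imI, dqFun_imJ, dqFun_imK] <;> ring

theorem dqHom_apply (q : DualQuaternion) : dqHom q = dqFun q := rfl

theorem dqHom_injective : Function.Injective dqHom := by
  intro a b h
  rw [dqHom_apply, dqHom_apply] at h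
  have h1 := congrArg QuaternionAlgebra.re h
  have h2 := congrArg QuaternionAlgebra.imI h
  have h3 := congrArg QuaternionAlgebra.imJ h
  have h4 := congrArg QuaternionAlgebra.imK h
  rw [dqFun_re, dqFun_re] at h1
  rw [dqFun_imI, dqFun_imI] at h2
  rw [dqFun_imJ, dqFun_imJ] at h3
  rw [dqFun_imK, dqFun_imK] at h4
  refine TrivSqZeroExt.ext ?_ ?_
  · refine Quaternion.ext _ _ ?_ ?_ ?_ ?_
    · simpa using congrArg TrivSqZeroExt.fst h1
    · simpa using congrArg TrivSqZeroExt.fst h2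
    · simpa using congrArg TrivSqZeroExt.fst h3
    · simpa using congrArg TrivSqZeroExt.fst h4
  · refine Quaternion.ext _ _ ?_ ?_ ?_ ?_
    · simpa using congrArg TrivSqZeroExt.snd h1
    · simpa using congrArg TrivSqZeroExt.snd h2
    · simpa using congrArg TrivSqZeroExt.snd h3
    · simpa using congrArg TrivSqZeroExt.snd h4

theorem dq_fst_star (q : DualQuaternion) : (star q).fst = star q.fst := rfl
theorem dq_snd_star (q : DualQuaternion) : (star q).snd = star q.snd := rfl
theorem fst_toDQ (d : DualNumber ℝ) : (toDQ d).fst = (d.fst : ℍ[ℝ]) := rfl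
theorem snd_toDQ (d : DualNumber ℝ) : (toDQ d).snd = (d.snd : ℍ[ℝ]) := rfl

theorem dqHom_star (q : DualQuaternion) : dqHom (star q) = star (dqHom q) := by
  rw [dqHom_apply, dqHom_apply]
  ext <;> simp [dqFun_re, dqFun_imI, dqFun_imJ, dqFun_imK, dq_fst_star, dq_snd_star]

theorem dqHom_toDQ (d : DualNumber ℝ) :
    dqHom (toDQ d) = (d : ℍ[DualNumber ℝ]) := by
  rw [dqHom_apply]
  ext <;> simp [dqFun_re, dqFun_imI, dqFun_imJ, dqFun_imK, fst_toDQ, snd_toDQ]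

theorem conjTranspose_map_dqHom {n : ℕ} (A : Matrix (Fin n) (Fin n) DualQuaternion) :
    (A.map dqHom)ᴴ = Aᴴ.map dqHom := by
  ext1 i j
  simp [Matrix.conjTranspose_apply, dqHom_star]

/-- The Moore determinant of a dual quaternion Hermitian matrix equals its Chen
determinant, and consequently equals the product of its eigenvalues. -/
theorem statement13 {n : ℕ} (A : Matrix (Fin n) (Fin n) DualQuaternion) (hA : Aᴴ = A)
    (lam : Fin n → DualNumber ℝ) (hlam : HasEigenvalues A lam) :
    Mdet A = Cdet A ∧ Mdet A = toDQ (∏ i, lam i) := by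
  obtain ⟨U, hU, hD⟩ := hlam
  have h2 : IsUnit (2 : DualNumber ℝ) := by
    have := (IsUnit.mk0 (2 : ℝ) two_ne_zero).map (algebraMap ℝ (DualNumber ℝ))
    rwa [map_ofNat] at this
  obtain ⟨hM, hC⟩ := dets_of_diagonalization h2 (A.map dqHom) (U.map dqHom)
    (by rw [conjTranspose_map_dqHom, hA]) lam
    (by
      rw [conjTranspose_map_dqHom, ← Matrix.map_mul, hU]
      exact Matrix.map_one _ (map_zero _) (map_one _))
    (by
      rw [conjTranspose_map_dqHom, ← Matrix.map_mul, ← Matrix.map_mul, hD,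
        Matrix.diagonal_map (map_zero _)]
      congr 1
      funext i
      exact dqHom_toDQ _)
  rw [Mdet_map, Quaternion.algebraMap_def, ← dqHom_toDQ] at hM
  rw [Cdet_map, Quaternion.algebraMap_def, ← dqHom_toDQ] at hC
  have hM' := dqHom_injective hM
  exact ⟨hM'.trans (dqHom_injective hC).symm, hM'⟩

end DQPaper
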